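/- arXiv:1104.0315 — 3 statements merged into one kernel-verified Lean document; each statement's English description precedes it below -/
import Mathlib

section
/- If G is a finite cyclic group, then any two linearly equivalent finite G-sets are isomorphic: if finite G-sets X and Y satisfy that every g ∈ G has the same number of fixed points on X as on Y, then there exists a G-equivariant bijection between X and Y. -/
open MulAction

/-!
Over any group, two finite `G`-sets are isomorphic as soon as every subgroup has the same number of
fixed points on both (Burnside). Indeed, a subgroup fixes a point of `X` iff it fixes a point of
`Y`, so the maximal point stabilizers of `X` and of `Y` coincide. Two points with a common
stabilizer have isomorphic orbits; removing these orbits preserves the hypothesis, and one concludes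
by induction. Over a cyclic group every subgroup is generated by some `g`, and its fixed points are
those of `g`.
-/

/-- The `G`-sets `X` and `Y` are isomorphic, that is, related by a `G`-equivariant bijection.
This is a proposition: the bijection is not part of the data. -/
def IsomorphicActions (G X Y : Type*) [SMul G X] [SMul G Y] : Prop :=
  ∃ e : X ≃ Y, ∀ (g : G) (x : X), e (g • x) = g • e x

namespace IsomorphicActions

section SMul

variable {G X Y Z X' Y' : Type*} [SMul G X] [SMul G Y] [SMul G Z] [SMul G X'] [SMul G Y']

theorem symm : IsomorphicActions G X Y → IsomorphicActions G Y X := by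
  rintro ⟨e, he⟩
  exact ⟨e.symm, fun g y ↦ by rw [e.symm_apply_eq, he, e.apply_symm_apply]⟩

theorem trans : IsomorphicActions G X Y → IsomorphicActions G Y Z → IsomorphicActions G X Z := by
  rintro ⟨e, he⟩ ⟨f, hf⟩
  exact ⟨e.trans f, fun g x ↦ by simp only [Equiv.trans_apply, he, hf]⟩

theorem sumCongr : IsomorphicActions G X Y → IsomorphicActions G X' Y' →
    IsomorphicActions G (X ⊕ X') (Y ⊕ Y') := by
  rintro ⟨e, he⟩ ⟨f, hf⟩
  refine ⟨e.sumCongr f, ?_⟩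
  rintro g (x | x')
  · exact congrArg Sum.inl (he g x)
  · exact congrArg Sum.inr (hf g x')

end SMul

variable {G X Y : Type*} [Group G] [MulAction G X] [MulAction G Y]

theorem sum_compl (s : SubMulAction G X) : IsomorphicActions G (s ⊕ ↥sᶜ) X := by
  classical
  refine ⟨Equiv.Set.sumCompl (s : Set X), ?_⟩
  rintro g (x | x) <;> rfl

theorem quotient_stabilizer_orbit (x : X) :
    IsomorphicActions G (G ⧸ stabilizer G x) (orbit G x) :=
  ⟨(orbitEquivQuotientStabilizer G x).symm,
    fun g q ↦ Subtype.ext (ofQuotientStabilizer_smul G x g q)⟩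

theorem orbit_of_stabilizer_eq {x : X} {y : Y} (hxy : stabilizer G x = stabilizer G y) :
    IsomorphicActions G (orbit G x) (orbit G y) := by
  have hx := quotient_stabilizer_orbit (G := G) x
  rw [hxy] at hx
  exact hx.symm.trans (quotient_stabilizer_orbit y)

end IsomorphicActions

section FixedPoints

variable {G X Y : Type*} [Group G] [MulAction G X] [MulAction G Y]

theorem mem_fixedPoints_subgroup_iff_le_stabilizer {H : Subgroup G} {x : X} :
    x ∈ fixedPoints H X ↔ H ≤ stabilizer G x :=
  ⟨fun hx h hh ↦ hx ⟨h, hh⟩, fun hx h ↦ hx h.2⟩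

theorem fixedPoints_zpowers (g : G) : fixedPoints (Subgroup.zpowers g) X = fixedBy X g := by
  ext x
  rw [mem_fixedPoints_subgroup_iff_le_stabilizer, Subgroup.zpowers_le, mem_stabilizer_iff,
    mem_fixedBy]

theorem IsomorphicActions.card_fixedPoints_eq (h : IsomorphicActions G X Y) (H : Subgroup G) :
    Nat.card (fixedPoints H X) = Nat.card (fixedPoints H Y) := by
  obtain ⟨e, he⟩ := h
  refine Nat.card_congr (e.subtypeEquiv fun x ↦ forall_congr' fun g ↦ ?_)
  rw [Subgroup.smul_def, Subgroup.smul_def, ← he, e.apply_eq_iff_eq]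

theorem card_fixedPoints_sum [Finite X] [Finite Y] (H : Subgroup G) :
    Nat.card (fixedPoints H (X ⊕ Y)) =
      Nat.card (fixedPoints H X) + Nat.card (fixedPoints H Y) := by
  rw [← Nat.card_sum]
  refine Nat.card_congr (Equiv.subtypeSum.trans (Equiv.sumCongr ?_ ?_)) <;>
    refine Equiv.subtypeEquivRight fun z ↦ forall_congr' fun g ↦ ?_
  · exact Sum.inl_injective.eq_iff
  · exact Sum.inr_injective.eq_iff

theorem card_fixedPoints_add_card_fixedPoints_compl [Finite X] (s : SubMulAction G X)
    (H : Subgroup G) :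
    Nat.card (fixedPoints H s) + Nat.card (fixedPoints H ↥sᶜ) = Nat.card (fixedPoints H X) := by
  rw [← card_fixedPoints_sum, (IsomorphicActions.sum_compl s).card_fixedPoints_eq]

end FixedPoints

section Burnside

/-- The orbit of `x` as an invariant subset, so that its complement is again a `G`-set. -/
def orbitSubMulAction (G : Type*) {X : Type*} [Monoid G] [MulAction G X] (x : X) :
    SubMulAction G X where
  carrier := orbit G x
  smul_mem' g _ hz := mapsTo_smul_orbit g x hz

variable {G X Y : Type*} [Group G] [MulAction G X] [MulAction G Y]

theorem exists_stabilizer_le_of_card_fixedPoints_eq [Finite X]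
    (h : ∀ H : Subgroup G, Nat.card (fixedPoints H X) = Nat.card (fixedPoints H Y)) (x : X) :
    ∃ y : Y, stabilizer G x ≤ stabilizer G y := by
  have : Nonempty (fixedPoints (stabilizer G x) X) :=
    ⟨x, mem_fixedPoints_subgroup_iff_le_stabilizer.2 le_rfl⟩
  have hpos : 0 < Nat.card (fixedPoints (stabilizer G x) Y) := h _ ▸ Nat.card_pos
  obtain ⟨⟨y, hy⟩⟩ := (Nat.card_pos_iff.1 hpos).1
  exact ⟨y, mem_fixedPoints_subgroup_iff_le_stabilizer.1 hy⟩

theorem exists_stabilizer_eq_of_card_fixedPoints_eq [Finite X] [Finite Y] [Nonempty X]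
    (h : ∀ H : Subgroup G, Nat.card (fixedPoints H X) = Nat.card (fixedPoints H Y)) :
    ∃ (x : X) (y : Y), stabilizer G x = stabilizer G y := by
  obtain ⟨x, -, hmax⟩ :=
    Set.finite_univ.exists_maximalFor (stabilizer G : X → Subgroup G) _ Set.univ_nonempty
  obtain ⟨y, hxy⟩ := exists_stabilizer_le_of_card_fixedPoints_eq h x
  obtain ⟨x', hyx'⟩ := exists_stabilizer_le_of_card_fixedPoints_eq (fun H ↦ (h H).symm) y
  exact ⟨x, y, hxy.antisymm (hyx'.trans (hmax (Set.mem_univ x') (hxy.trans hyx')))⟩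

theorem isomorphicActions_of_card_fixedPoints_eq [Finite X] [Finite Y]
    (h : ∀ H : Subgroup G, Nat.card (fixedPoints H X) = Nat.card (fixedPoints H Y)) :
    IsomorphicActions G X Y := by
  induction hn : Nat.card X using Nat.strong_induction_on generalizing X Y with
  | _ n ih =>
  rcases isEmpty_or_nonempty X with _ | _
  · have : IsEmpty Y := ⟨fun y ↦
      isEmptyElim (exists_stabilizer_le_of_card_fixedPoints_eq (fun H ↦ (h H).symm) y).choose⟩
    exact ⟨Equiv.equivOfIsEmpty X Y, fun _ ↦ isEmptyElim⟩
  · obtain ⟨x, y, hxy⟩ := exists_stabilizer_eq_of_card_fixedPoints_eq h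
    let s := orbitSubMulAction G x
    let t := orbitSubMulAction G y
    have orbits_iso : IsomorphicActions G s t := .orbit_of_stabilizer_eq hxy
    have card_compl_lt : Nat.card ↥sᶜ < n :=
      hn ▸ Finite.card_subtype_lt (x := x) (not_not_intro (mem_orbit_self x))
    have card_compl_eq (H : Subgroup G) :
        Nat.card (fixedPoints H ↥sᶜ) = Nat.card (fixedPoints H ↥tᶜ) := by
      have hs := card_fixedPoints_add_card_fixedPoints_compl s H
      have ht := card_fixedPoints_add_card_fixedPoints_compl t H
      have hst := orbits_iso.card_fixedPoints_eq H
      have hXY := h H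
      lia
    have compls_iso : IsomorphicActions G ↥sᶜ ↥tᶜ := ih _ card_compl_lt card_compl_eq rfl
    exact (IsomorphicActions.sum_compl s).symm.trans
      ((orbits_iso.sumCongr compls_iso).trans (.sum_compl t))

end Burnside

theorem linEquiv_imp_iso_of_cyclic_general {G X Y : Type*} [Group G] [IsCyclic G] [Finite X]
    [Finite Y] [MulAction G X] [MulAction G Y]
    (h : ∀ g : G, Nat.card (fixedBy X g) = Nat.card (fixedBy Y g)) :
    IsomorphicActions G X Y := by
  refine isomorphicActions_of_card_fixedPoints_eq fun H ↦ ?_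
  obtain ⟨g, rfl⟩ := H.isCyclic_iff_exists_zpowers_eq_top.1 inferInstance
  rw [fixedPoints_zpowers, fixedPoints_zpowers, h]

/-- For a finite cyclic group `G`, any two linearly equivalent finite `G`-sets are
isomorphic: if every `g : G` has the same number of fixed points on `X` as on `Y`,
then there is a `G`-equivariant bijection between `X` and `Y`. -/
theorem linEquiv_imp_iso_of_cyclic (G : Type) [Group G] [Fintype G] (hG : IsCyclic G)
    (X Y : Type) [Fintype X] [Fintype Y] [MulAction G X] [MulAction G Y]
    (h : ∀ g : G, Nat.card (fixedBy X g) = Nat.card (fixedBy Y g)) :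
    ∃ e : X ≃ Y, ∀ (g : G) (x : X), e (g • x) = g • e x :=
  linEquiv_imp_iso_of_cyclic_general h
end

section
/- Let G be a finite group and let X and Y be linearly equivalent finite G-sets. If the action of G on X is transitive (X is nonempty and has a single orbit), then the action of G on Y is also transitive and |Y| = |X|. In particular, there is no unbalanced pair of G-sets in which one of the sets is transitive. -/
open MulAction

/-- The number of `G`-orbits of cardinality `n` in the `G`-set `X`. -/
noncomputable def orbitCountOfSize (G : Type) [Group G] (X : Type) [MulAction G X] (n : ℕ) : ℕ :=
  Nat.card {o : orbitRel.Quotient G X // Nat.card o.orbit = n}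

/-!
By Burnside's lemma the number of orbits is the average number of fixed points, so it is the same
for linearly equivalent `G`-sets; being transitive means that this number is `1`. The cardinality
of a `G`-set is the number of fixed points of `1`, and it is the only orbit size of a transitive
`G`-set.
-/

section Orbits

variable (G X : Type*) [Group G] [MulAction G X]

theorem sum_natCard_fixedBy_eq [Fintype G] [Finite X] :
    ∑ g : G, Nat.card (fixedBy X g) = Nat.card (orbitRel.Quotient G X) * Nat.card G := by
  rw [← Nat.card_sigma, ← Nat.card_prod]
  exact Nat.card_congr (sigmaFixedByEquivOrbitsProdGroup G X)

theorem natCard_orbits_eq_one_iff :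
    Nat.card (orbitRel.Quotient G X) = 1 ↔ Nonempty X ∧ IsPretransitive G X := by
  rw [Nat.card_eq_one_iff_unique, pretransitive_iff_subsingleton_quotient, and_comm]
  exact and_congr_left' (nonempty_quotient_iff _)

variable {G X}

theorem natCard_orbit_eq_of_isPretransitive [IsPretransitive G X] (o : orbitRel.Quotient G X) :
    Nat.card o.orbit = Nat.card X := by
  induction o using Quotient.inductionOn' with
  | h x => rw [orbitRel.Quotient.orbit_mk, orbit_eq_univ, Nat.card_univ]

end Orbits

theorem orbitCountOfSize_of_isPretransitive (G X : Type) [Group G] [MulAction G X] [Nonempty X]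
    [IsPretransitive G X] (n : ℕ) :
    orbitCountOfSize G X n = if Nat.card X = n then 1 else 0 := by
  have card_orbits : Nat.card (orbitRel.Quotient G X) = 1 :=
    (natCard_orbits_eq_one_iff G X).2 ⟨inferInstance, inferInstance⟩
  simp only [orbitCountOfSize, natCard_orbit_eq_of_isPretransitive]
  split_ifs with hn <;> simp [hn, card_orbits]

/-- Linear equivalence of `G`-sets: every `g : G` has as many fixed points on `X` as on `Y`.
For finite `G`-sets this is equality of the permutation characters. Infinite fixed-point sets are
counted as `0`, so the notion is only meaningful for finite `X` and `Y`. -/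
def LinearlyEquivalent (G X Y : Type*) [Group G] [MulAction G X] [MulAction G Y] : Prop :=
  ∀ g : G, Nat.card (fixedBy X g) = Nat.card (fixedBy Y g)

namespace LinearlyEquivalent

variable {G X Y : Type*} [Group G] [MulAction G X] [MulAction G Y]

theorem natCard_eq (h : LinearlyEquivalent G X Y) : Nat.card X = Nat.card Y := by
  simpa only [fixedBy_one_eq_univ, Nat.card_univ] using h 1

theorem natCard_orbits_eq [Finite G] [Finite X] [Finite Y] (h : LinearlyEquivalent G X Y) :
    Nat.card (orbitRel.Quotient G X) = Nat.card (orbitRel.Quotient G Y) := by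
  have := Fintype.ofFinite G
  refine Nat.eq_of_mul_eq_mul_right (Nat.card_pos (α := G)) ?_
  calc Nat.card (orbitRel.Quotient G X) * Nat.card G
      = ∑ g : G, Nat.card (fixedBy X g) := (sum_natCard_fixedBy_eq G X).symm
    _ = ∑ g : G, Nat.card (fixedBy Y g) := Fintype.sum_congr _ _ h
    _ = Nat.card (orbitRel.Quotient G Y) * Nat.card G := sum_natCard_fixedBy_eq G Y

theorem nonempty_and_isPretransitive_iff [Finite G] [Finite X] [Finite Y]
    (h : LinearlyEquivalent G X Y) :
    Nonempty X ∧ IsPretransitive G X ↔ Nonempty Y ∧ IsPretransitive G Y := by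
  rw [← natCard_orbits_eq_one_iff, ← natCard_orbits_eq_one_iff, h.natCard_orbits_eq]

end LinearlyEquivalent

/-- If `X` and `Y` are linearly equivalent finite `G`-sets and `X` is transitive (nonempty
with a single orbit), then `Y` is transitive as well and `|Y| = |X|`; in particular the pair
is not unbalanced: for every `n` the number of orbits of cardinality `n` is the same in `X`
and in `Y`. -/
theorem linEquiv_of_transitive
    (G X Y : Type) [Group G] [Fintype G] [Fintype X] [Fintype Y]
    [MulAction G X] [MulAction G Y]
    (h : ∀ g : G, Nat.card (fixedBy X g) = Nat.card (fixedBy Y g))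
    (hX : Nonempty X ∧ IsPretransitive G X) :
    IsPretransitive G Y ∧ Nat.card Y = Nat.card X ∧
      ∀ n : ℕ, orbitCountOfSize G X n = orbitCountOfSize G Y n := by
  have hXY : LinearlyEquivalent G X Y := h
  obtain ⟨_, transY⟩ := hXY.nonempty_and_isPretransitive_iff.1 hX
  obtain ⟨_, _⟩ := hX
  refine ⟨transY, hXY.natCard_eq.symm, fun n => ?_⟩
  rw [orbitCountOfSize_of_isPretransitive, orbitCountOfSize_of_isPretransitive, hXY.natCard_eq]
end

section
/- Let p be a prime and G = (ℤ/pℤ) × (ℤ/pℤ). Then for every g ∈ G, the sum over all subgroups H of G of cardinality p of the number of fixed points of g on the coset space G/H equals p(p+1) if g is the identity and equals p otherwise. Consequently, the disjoint union of the coset spaces G/H over the p+1 subgroups H of order p is linearly equivalent to the disjoint union of p one-point G-sets and one copy of G with its regular action, and these two G-sets form an unbalanced pair. -/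
open MulAction

/-- Two `G`-sets are *linearly equivalent* if every `g ∈ G` has the same number of
fixed points in each. -/
def IsLinEquiv (G : Type) [Group G] (X Y : Type) [MulAction G X] [MulAction G Y] : Prop :=
  ∀ g : G, Nat.card (fixedBy X g) = Nat.card (fixedBy Y g)

/-- An *unbalanced pair* of `G`-sets: linearly equivalent, but differing in the number of
orbits of some cardinality. -/
def IsUnbalancedPair (G : Type) [Group G] (X Y : Type) [MulAction G X] [MulAction G Y] : Prop :=
  IsLinEquiv G X Y ∧ ∃ n : ℕ, orbitCountOfSize G X n ≠ orbitCountOfSize G Y n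

/-!
In a noncyclic group `G` of order `p ^ 2` every `g ≠ 1` has order `p`, so it lies in exactly one
subgroup of order `p`, namely `⟨g⟩`; counting elements of order `p` gives `p + 1` such subgroups.
Since `G` is abelian, `g` fixes all `p` cosets of `H` if `g ∈ H` and none otherwise, which gives
the fixed-point counts `p * (p + 1)` for `1` and `p` for `g ≠ 1`. On the other side `1` fixes all
`p + p ^ 2` points, and `g ≠ 1` fixes only the `p` one-point orbits. The pair is unbalanced because
no `G ⧸ H` with `H` of order `p` contains a one-point orbit.
-/

section FixedPoints

variable {M ι X Y : Type*} {Z : ι → Type*} [Monoid M] [MulAction M X] [MulAction M Y]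
  [∀ i, MulAction M (Z i)]

theorem sigma_mk_mem_fixedBy {g : M} {i : ι} {z : Z i} :
    (⟨i, z⟩ : Σ i, Z i) ∈ fixedBy (Σ i, Z i) g ↔ z ∈ fixedBy (Z i) g := by
  simp only [mem_fixedBy, Sigma.smul_mk, Sigma.mk.injEq, heq_eq_eq, true_and]

theorem sigma_mk_mem_fixedPoints {i : ι} {z : Z i} :
    (⟨i, z⟩ : Σ i, Z i) ∈ fixedPoints M (Σ i, Z i) ↔ z ∈ fixedPoints M (Z i) :=
  forall_congr' fun _ ↦ sigma_mk_mem_fixedBy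

theorem sum_inl_mem_fixedPoints {x : X} :
    (Sum.inl x : X ⊕ Y) ∈ fixedPoints M (X ⊕ Y) ↔ x ∈ fixedPoints M X := by
  simp only [mem_fixedPoints, Sum.smul_inl, Sum.inl.injEq]

theorem card_orbit_eq_one_iff_mem_fixedPoints {x : X} :
    Nat.card (orbit M x) = 1 ↔ x ∈ fixedPoints M X := by
  rw [← subsingleton_orbit_iff_mem_fixedPoints, Nat.card_eq_one_iff_unique, Set.subsingleton_coe,
    and_iff_left (nonempty_orbit x).to_subtype]

theorem card_fixedBy_sigma [Fintype ι] [∀ i, Finite (Z i)] (g : M) :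
    Nat.card (fixedBy (Σ i, Z i) g) = ∑ i, Nat.card (fixedBy (Z i) g) := by
  rw [← Nat.card_sigma]
  exact Nat.card_congr
    { toFun z := ⟨z.1.1, z.1.2, sigma_mk_mem_fixedBy.1 z.2⟩
      invFun z := ⟨⟨z.1, z.2.1⟩, sigma_mk_mem_fixedBy.2 z.2.2⟩ }

theorem card_fixedBy_sum [Finite X] [Finite Y] (g : M) :
    Nat.card (fixedBy (X ⊕ Y) g) = Nat.card (fixedBy X g) + Nat.card (fixedBy Y g) := by
  rw [← Nat.card_sum]
  refine Nat.card_congr (Equiv.subtypeSum.trans (Equiv.sumCongr ?_ ?_)) <;>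
    exact Equiv.subtypeEquivRight fun _ ↦ by simp

end FixedPoints

section CosetSpaces

variable {G : Type*} [Group G]

theorem card_fixedBy_self [DecidableEq G] (g : G) :
    Nat.card (fixedBy G g) = if g = 1 then Nat.card G else 0 := by
  split_ifs with hg
  · rw [hg, fixedBy_one_eq_univ, Nat.card_univ]
  · rw [fixedBy_mul_eq_empty_iff.2 hg, Nat.card_of_isEmpty]

theorem mem_fixedBy_quotient_iff {H : Subgroup G} [H.Normal] {g : G} (q : G ⧸ H) :
    q ∈ fixedBy (G ⧸ H) g ↔ g ∈ H := by
  induction q using QuotientGroup.induction_on with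
  | H x =>
    rw [mem_fixedBy, Quotient.smul_coe, smul_eq_mul, QuotientGroup.mk_mul, mul_eq_right,
      QuotientGroup.eq_one_iff]

theorem card_fixedBy_quotient (H : Subgroup G) [H.Normal] (g : G) [Decidable (g ∈ H)] :
    Nat.card (fixedBy (G ⧸ H) g) = if g ∈ H then H.index else 0 := by
  split_ifs with hg
  · rw [Set.eq_univ_of_forall fun q ↦ (mem_fixedBy_quotient_iff q).2 hg, Nat.card_univ,
      Subgroup.index]
  · rw [Set.eq_empty_of_forall_notMem fun q ↦ mt (mem_fixedBy_quotient_iff q).1 hg,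
      Nat.card_of_isEmpty]

theorem fixedPoints_quotient_eq_empty {H : Subgroup G} (hH : H ≠ ⊤) :
    fixedPoints G (G ⧸ H) = ∅ := by
  refine Set.eq_empty_of_forall_notMem fun q hq ↦ hH ?_
  have eq_q (x : G ⧸ H) : x = q := by
    obtain ⟨g, rfl⟩ := exists_smul_eq G q x
    exact hq g
  refine (Subgroup.eq_top_iff' H).2 fun g ↦ ?_
  simpa using QuotientGroup.eq.1 ((eq_q (1 : G)).trans (eq_q g).symm)

end CosetSpaces

section OrbitCount

variable {G X : Type} [Group G] [MulAction G X]

theorem orbitCountOfSize_one : orbitCountOfSize G X 1 = Nat.card (fixedPoints G X) := by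
  symm
  refine Nat.card_eq_of_bijective
    (fun x ↦ ⟨Quotient.mk'' x.1, card_orbit_eq_one_iff_mem_fixedPoints.2 x.2⟩) ⟨?_, ?_⟩
  · rintro ⟨x, hx⟩ ⟨y, hy⟩ hxy
    have hmem : x ∈ orbit G y := Quotient.exact (congrArg Subtype.val hxy)
    exact Subtype.ext (mem_fixedPoints'.1 hy x hmem)
  · rintro ⟨o, ho⟩
    induction o using Quotient.inductionOn' with
    | h x => exact ⟨⟨x, card_orbit_eq_one_iff_mem_fixedPoints.1 ho⟩, rfl⟩

theorem orbitCountOfSize_one_sigma_quotient_eq_zero {ι : Type} {H : ι → Subgroup G}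
    (hH : ∀ i, H i ≠ ⊤) : orbitCountOfSize G (Σ i, G ⧸ H i) 1 = 0 := by
  rw [orbitCountOfSize_one, Set.eq_empty_of_forall_notMem (s := fixedPoints G (Σ i, G ⧸ H i)),
    Nat.card_of_isEmpty]
  rintro ⟨i, q⟩ hq
  exact (fixedPoints_quotient_eq_empty (hH i)).subset
    (sigma_mk_mem_fixedPoints (Z := fun i ↦ G ⧸ H i).1 hq)

theorem orbitCountOfSize_one_sigma_quotient_top_sum_ne_zero {ι : Type} [Nonempty ι] [Finite ι]
    [Finite X] : orbitCountOfSize G ((Σ _ : ι, G ⧸ (⊤ : Subgroup G)) ⊕ X) 1 ≠ 0 := by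
  have fixed_point : Sum.inl ⟨Classical.arbitrary ι, ((1 : G) : G ⧸ (⊤ : Subgroup G))⟩ ∈
      fixedPoints G ((Σ _ : ι, G ⧸ (⊤ : Subgroup G)) ⊕ X) := by
    have := QuotientGroup.subsingleton_quotient_top (G := G)
    rw [sum_inl_mem_fixedPoints, sigma_mk_mem_fixedPoints, fixedPoints_of_subsingleton]
    exact Set.mem_univ _
  rw [orbitCountOfSize_one]
  exact Nat.card_ne_zero.2 ⟨⟨_, fixed_point⟩, inferInstance⟩

end OrbitCount

section SubgroupsOfGivenOrder

variable {G : Type*} [Group G] {p : ℕ} [hp : Fact p.Prime]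

theorem index_eq_of_card_eq_sq {n : ℕ} (hn : 0 < n) (hG : Nat.card G = n ^ 2) {H : Subgroup G}
    (hH : Nat.card H = n) : H.index = n := by
  refine Nat.eq_of_mul_eq_mul_left hn ?_
  rw [← sq, ← hG, ← H.card_mul_index, hH]

theorem card_eq_orderOf_and_mem_iff_eq_zpowers {g : G} (hg : IsOfFinOrder g) {H : Subgroup G} :
    Nat.card H = orderOf g ∧ g ∈ H ↔ H = Subgroup.zpowers g := by
  constructor
  · rintro ⟨hcard, hmem⟩
    have : Finite H := Nat.finite_of_card_ne_zero (hcard ▸ hg.orderOf_pos.ne')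
    refine (Subgroup.eq_of_le_of_card_ge (Subgroup.zpowers_le.2 hmem) ?_).symm
    rw [hcard, Nat.card_zpowers]
  · rintro rfl
    exact ⟨Nat.card_zpowers g, Subgroup.mem_zpowers g⟩

theorem orderOf_eq_prime_iff_ne_one_of_mem {H : Subgroup G} (hH : Nat.card H = p) {g : G}
    (hg : g ∈ H) : orderOf g = p ↔ g ≠ 1 := by
  have hdvd : orderOf g ∣ p := hH ▸ Subgroup.orderOf_dvd_natCard H hg
  rw [Ne, ← orderOf_eq_one_iff]
  exact ⟨fun h ↦ h ▸ hp.out.ne_one, (hp.out.eq_one_or_self_of_dvd _ hdvd).resolve_left⟩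

theorem card_subgroup_card_eq_prime_mul_pred [Finite G] :
    Nat.card {H : Subgroup G // Nat.card H = p} * (p - 1) = Nat.card {g : G // orderOf g = p} := by
  classical
  have := Fintype.ofFinite G
  have := Fintype.ofFinite (Subgroup G)
  rw [Nat.card_eq_fintype_card, Nat.card_eq_fintype_card, Fintype.card_subtype,
    Fintype.card_subtype, ← mul_one (Finset.card {g : G | orderOf g = p})]
  refine Finset.card_mul_eq_card_mul (fun H g ↦ g ∈ H) (fun H hH ↦ ?_) fun g hg ↦ ?_
  · have hH : Nat.card H = p := (Finset.mem_filter_univ H).1 hH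
    have elements_of_order_p : Finset.bipartiteAbove (fun H g ↦ g ∈ H) {g : G | orderOf g = p} H =
        Finset.erase {g | g ∈ H} 1 := by
      ext g
      simpa [and_comm (a := g ∈ H)] using orderOf_eq_prime_iff_ne_one_of_mem hH (g := g)
    rw [elements_of_order_p, Finset.card_erase_of_mem (by simp [H.one_mem]), ← hH,
      Nat.card_eq_fintype_card, Fintype.card_subtype]
  · obtain rfl : orderOf g = p := (Finset.mem_filter_univ g).1 hg
    refine Finset.card_eq_one.2 ⟨Subgroup.zpowers g, ?_⟩
    ext H
    rw [Finset.bipartiteBelow, Finset.filter_filter, Finset.mem_filter_univ, Finset.mem_singleton,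
      card_eq_orderOf_and_mem_iff_eq_zpowers (isOfFinOrder_of_finite g)]

end SubgroupsOfGivenOrder

section NoncyclicOfCardPrimeSq

variable {p : ℕ} [hp : Fact p.Prime]

theorem finite_of_card_eq_prime_sq {α : Type*} (hα : Nat.card α = p ^ 2) : Finite α :=
  Nat.finite_of_card_ne_zero (hα ▸ pow_ne_zero 2 hp.out.ne_zero)

variable {G : Type*} [Group G]

theorem orderOf_eq_prime_iff_ne_one_of_not_isCyclic (hG : Nat.card G = p ^ 2)
    (hcyc : ¬ IsCyclic G) {g : G} : orderOf g = p ↔ g ≠ 1 := by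
  have := finite_of_card_eq_prime_sq hG
  have : Nontrivial G :=
    Finite.one_lt_card_iff_nontrivial.1 (hG ▸ one_lt_pow₀ hp.out.one_lt two_ne_zero)
  refine ⟨?_, (Monoid.exponent_eq_prime_iff hp.out).1
    ((not_isCyclic_iff_exponent_eq_prime hp.out hG).1 hcyc) g⟩
  rintro hg rfl
  exact hp.out.ne_one (hg.symm.trans orderOf_one)

theorem card_subgroup_card_eq_prime_of_not_isCyclic (hG : Nat.card G = p ^ 2)
    (hcyc : ¬ IsCyclic G) : Nat.card {H : Subgroup G // Nat.card H = p} = p + 1 := by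
  have := finite_of_card_eq_prime_sq hG
  refine Nat.eq_of_mul_eq_mul_right (Nat.sub_pos_of_lt hp.out.one_lt) ?_
  calc Nat.card {H : Subgroup G // Nat.card H = p} * (p - 1)
      = Nat.card {g : G // orderOf g = p} := card_subgroup_card_eq_prime_mul_pred
    _ = Nat.card ({1}ᶜ : Set G) := Nat.card_congr <| Equiv.subtypeEquivRight fun _ ↦
        orderOf_eq_prime_iff_ne_one_of_not_isCyclic hG hcyc
    _ = p ^ 2 - 1 := by rw [Nat.card_coe_set_eq, Set.ncard_compl, Set.ncard_singleton, hG]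
    _ = (p + 1) * (p - 1) := by simpa using Nat.sq_sub_sq p 1

theorem ne_top_of_card_eq_prime (hG : Nat.card G = p ^ 2) {H : Subgroup G}
    (hH : Nat.card H = p) : H ≠ ⊤ := by
  rw [Ne, ← Subgroup.index_eq_one, index_eq_of_card_eq_sq hp.out.pos hG hH]
  exact hp.out.ne_one

theorem sum_card_fixedBy_quotient_of_not_isCyclic [DecidableEq G] [Fintype (Subgroup G)]
    (hG : Nat.card G = p ^ 2) (hcyc : ¬ IsCyclic G) (g : G) :
    ∑ H ∈ Finset.univ.filter (fun H : Subgroup G ↦ Nat.card H = p),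
        Nat.card (fixedBy (G ⧸ H) g) =
      if g = 1 then p * (p + 1) else p := by
  classical
  have := finite_of_card_eq_prime_sq hG
  have := IsPGroup.isMulCommutative_of_card_eq_prime_sq hG
  have card_fixedBy (H : Subgroup G)
      (hH : H ∈ Finset.univ.filter (fun H : Subgroup G ↦ Nat.card H = p)) :
      Nat.card (fixedBy (G ⧸ H) g) = if g ∈ H then p else 0 := by
    rw [card_fixedBy_quotient,
      index_eq_of_card_eq_sq hp.out.pos hG ((Finset.mem_filter_univ H).1 hH)]
  rw [Finset.sum_congr rfl card_fixedBy, ← Finset.sum_filter, Finset.filter_filter,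
    Finset.sum_const, smul_eq_mul]
  split_ifs with hg
  · simp only [hg, one_mem, and_true]
    rw [← Fintype.card_subtype, ← Nat.card_eq_fintype_card,
      card_subgroup_card_eq_prime_of_not_isCyclic hG hcyc, mul_comm]
  · obtain rfl := (orderOf_eq_prime_iff_ne_one_of_not_isCyclic hG hcyc).2 hg
    have eq_singleton : Finset.univ.filter (fun H : Subgroup G ↦ Nat.card H = orderOf g ∧ g ∈ H) =
        {Subgroup.zpowers g} := by
      ext H
      rw [Finset.mem_filter_univ, Finset.mem_singleton,
        card_eq_orderOf_and_mem_iff_eq_zpowers (isOfFinOrder_of_finite g)]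
    rw [eq_singleton, Finset.card_singleton, one_mul]

end NoncyclicOfCardPrimeSq

theorem isLinEquiv_sigma_quotient_of_not_isCyclic {G : Type} [Group G] {p : ℕ} [Fact p.Prime]
    (hG : Nat.card G = p ^ 2) (hcyc : ¬ IsCyclic G) :
    IsLinEquiv G (Σ H : {H : Subgroup G // Nat.card H = p}, G ⧸ H.1)
      ((Σ _ : Fin p, G ⧸ (⊤ : Subgroup G)) ⊕ G) := by
  classical
  have := finite_of_card_eq_prime_sq hG
  have := Fintype.ofFinite (Subgroup G)
  intro g
  calc Nat.card (fixedBy (Σ H : {H : Subgroup G // Nat.card H = p}, G ⧸ H.1) g)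
      = ∑ H ∈ Finset.univ.filter (fun H : Subgroup G ↦ Nat.card H = p),
          Nat.card (fixedBy (G ⧸ H) g) := by
        rw [card_fixedBy_sigma, ← Finset.sum_subtype_eq_sum_filter, Finset.subtype_univ]
    _ = if g = 1 then p * (p + 1) else p :=
        sum_card_fixedBy_quotient_of_not_isCyclic hG hcyc g
    _ = p + if g = 1 then p ^ 2 else 0 := by split_ifs <;> ring
    _ = Nat.card (fixedBy ((Σ _ : Fin p, G ⧸ (⊤ : Subgroup G)) ⊕ G) g) := by
        simp only [card_fixedBy_sum, card_fixedBy_sigma, card_fixedBy_quotient, card_fixedBy_self,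
          hG, Subgroup.mem_top, if_true, Subgroup.index_top, Fin.sum_const, smul_eq_mul, mul_one]

theorem zmod_p_sq_unbalanced_pair_general {G : Type} [Group G] [DecidableEq G]
    [Fintype (Subgroup G)] {p : ℕ} [Fact p.Prime] (hG : Nat.card G = p ^ 2)
    (hcyc : ¬ IsCyclic G) :
    (∀ g : G, ∑ H ∈ Finset.univ.filter (fun H : Subgroup G ↦ Nat.card H = p),
          Nat.card (fixedBy (G ⧸ H) g) =
        if g = 1 then p * (p + 1) else p) ∧
      IsUnbalancedPair G (Σ H : {H : Subgroup G // Nat.card H = p}, G ⧸ H.1)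
        ((Σ _ : Fin p, G ⧸ (⊤ : Subgroup G)) ⊕ G) := by
  have := finite_of_card_eq_prime_sq hG
  refine ⟨sum_card_fixedBy_quotient_of_not_isCyclic hG hcyc,
    isLinEquiv_sigma_quotient_of_not_isCyclic hG hcyc, 1, ?_⟩
  rw [orbitCountOfSize_one_sigma_quotient_eq_zero fun H ↦ ne_top_of_card_eq_prime hG H.2]
  exact orbitCountOfSize_one_sigma_quotient_top_sum_ne_zero.symm

section ZModSq

variable (p : ℕ)

theorem card_multiplicative_zmod_prod_self :
    Nat.card (Multiplicative (ZMod p) × Multiplicative (ZMod p)) = p ^ 2 := by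
  rw [Nat.card_prod, Nat.card_congr Multiplicative.toAdd, Nat.card_zmod, sq]

theorem not_isCyclic_multiplicative_zmod_prod_self [hp : Fact p.Prime] :
    ¬ IsCyclic (Multiplicative (ZMod p) × Multiplicative (ZMod p)) := by
  rw [Group.isCyclic_prod_iff, Nat.card_congr Multiplicative.toAdd, Nat.card_zmod,
    Nat.coprime_self]
  exact fun h ↦ hp.out.ne_one h.2.2

end ZModSq

/-- For `G = (ℤ/pℤ) × (ℤ/pℤ)` with `p` prime: for every `g ∈ G` the sum, over the subgroups
`H` of cardinality `p`, of the number of fixed points of `g` on `G ⧸ H` equals `p(p+1)` if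
`g = 1` and `p` otherwise.  Consequently the disjoint union of the coset spaces `G ⧸ H`
over the `p + 1` subgroups `H` of order `p` and the disjoint union of `p` one-point
`G`-sets (copies of `G ⧸ ⊤`) with one copy of `G` (its regular action) are linearly
equivalent and form an unbalanced pair. -/
theorem zmod_p_sq_unbalanced_pair (p : ℕ) [Fact p.Prime] :
    (∀ g : Multiplicative (ZMod p) × Multiplicative (ZMod p),
        ∑ H ∈ Finset.univ.filter
            (fun H : Subgroup (Multiplicative (ZMod p) × Multiplicative (ZMod p)) => Nat.card H = p),
          Nat.card (fixedBy ((Multiplicative (ZMod p) × Multiplicative (ZMod p)) ⧸ H) g)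
          = if g = 1 then p * (p + 1) else p) ∧
      IsUnbalancedPair (Multiplicative (ZMod p) × Multiplicative (ZMod p))
        ((H : {H : Subgroup (Multiplicative (ZMod p) × Multiplicative (ZMod p)) // Nat.card H = p}) × ((Multiplicative (ZMod p) × Multiplicative (ZMod p)) ⧸ H.1))
        (((_ : Fin p) × ((Multiplicative (ZMod p) × Multiplicative (ZMod p)) ⧸ (⊤ : Subgroup (Multiplicative (ZMod p) × Multiplicative (ZMod p)))))
          ⊕ (Multiplicative (ZMod p) × Multiplicative (ZMod p))) :=
  zmod_p_sq_unbalanced_pair_general (card_multiplicative_zmod_prod_self p)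
    (not_isCyclic_multiplicative_zmod_prod_self p)
end
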